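/- arXiv:math/0508153 — 2 statements merged into one kernel-verified Lean document; each statement's English description precedes it below -/
import Mathlib

section
/- Let n ≥ 2 and let j satisfy 1 ≤ j ≤ n²−3. Then the number of reduced decompositions ω = i_1⋯i_{n²} of w_0^B ∈ B_n with (i_j, i_{j+1}, i_{j+2}, i_{j+3}) ∈ {(0,1,0,1), (1,0,1,0)} equals the number of reduced decompositions ω = i_1⋯i_{n²} of w_0^B with (i_1, i_2, i_3, i_4) ∈ {(0,1,0,1), (1,0,1,0)}. -/
/-- The generator `sᵢ` of the hyperoctahedral group `Bₙ`, realized as a permutation of `ℤ`: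
`s₀` swaps `1` and `-1`; for `i ≥ 1`, `sᵢ` swaps `i` with `i+1` and `-i` with `-(i+1)`,
fixing all other integers. -/
def sB (i : ℕ) : Equiv.Perm ℤ :=
  if i = 0 then Equiv.swap 1 (-1)
  else Equiv.swap (i : ℤ) ((i : ℤ) + 1) * Equiv.swap (-(i : ℤ)) (-((i : ℤ) + 1))

/-- The product `s_{i₁} ⋯ s_{i_ℓ}` corresponding to the word `i₁ ⋯ i_ℓ`. -/
def wordProd (l : List ℕ) : Equiv.Perm ℤ := (l.map sB).prod

/-- The underlying function of the longest element `w₀ᴮ ∈ Bₙ`: `i ↦ -i` on `{-n, …, n}`,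
fixing all other integers. -/
def w0BFun (n : ℕ) : ℤ → ℤ := fun i => if -(n : ℤ) ≤ i ∧ i ≤ (n : ℤ) then -i else i

lemma w0BFun_involutive (n : ℕ) : Function.Involutive (w0BFun n) := by
  intro i
  unfold w0BFun
  split_ifs <;> omega

/-- The longest element `w₀ᴮ ∈ Bₙ`, as a permutation of `ℤ`. -/
def w0B (n : ℕ) : Equiv.Perm ℤ := (w0BFun_involutive n).toPerm

/-- `l` is a reduced decomposition of `w` in `Bₙ`: a word over the alphabet `{0, …, n-1}`
whose product of generators is `w`, of minimal length among all such words. -/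
def IsReducedWord (n : ℕ) (w : Equiv.Perm ℤ) (l : List ℕ) : Prop :=
  (∀ i ∈ l, i < n) ∧ wordProd l = w ∧
    ∀ l' : List ℕ, (∀ i ∈ l', i < n) → wordProd l' = w → l.length ≤ l'.length

/-- `R(w)`, the set of reduced decompositions of `w` in `Bₙ`. -/
def RSet (n : ℕ) (w : Equiv.Perm ℤ) : Set (List ℕ) := {l | IsReducedWord n w l}

/-- The length `ℓ(w)` of `w ∈ Bₙ`: the minimal length of a word over `{0, …, n-1}`
whose product of generators is `w`. -/
noncomputable def lenB (n : ℕ) (w : Equiv.Perm ℤ) : ℕ :=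
  sInf {m : ℕ | ∃ l : List ℕ, (∀ i ∈ l, i < n) ∧ wordProd l = w ∧ l.length = m}

/-- Whether a word begins with `k (k+1) k` or `(k+1) k (k+1)` for some `k ≥ 1`. -/
def isYB : List ℕ → Bool
  | a :: b :: c :: _ => (a != 0 && b == a + 1 && c == a) || (b != 0 && a == b + 1 && c == b + 1)
  | _ => false

/-- The number of Yang–Baxter moves in a word. -/
def ybCount (l : List ℕ) : ℕ :=
  ((Finset.range l.length).filter fun j => isYB (l.drop j) = true).card

/-- Whether a word begins with `0101` or `1010`. -/
def is01 : List ℕ → Bool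
  | a :: b :: c :: d :: _ =>
      (a == 0 && b == 1 && c == 0 && d == 1) || (a == 1 && b == 0 && c == 1 && d == 0)
  | _ => false

/-- The number of 01 moves in a word. -/
def m01Count (l : List ℕ) : ℕ :=
  ((Finset.range l.length).filter fun j => is01 (l.drop j) = true).card

/-- The underlying function of `w_k ∈ Bₙ`: `k ↦ -(k+2)`, `k+2 ↦ -k`, and `i ↦ -i` for all
other `i ∈ {1, …, n}`, extended by `w(-i) = -w(i)` and fixing all integers outside
`{-n, …, -1, 1, …, n}`. -/
def wkFun (n k : ℕ) : ℤ → ℤ := fun i =>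
  if -(n : ℤ) ≤ i ∧ i ≤ (n : ℤ) then
    if i = (k : ℤ) then -((k : ℤ) + 2)
    else if i = (k : ℤ) + 2 then -(k : ℤ)
    else if i = -(k : ℤ) then (k : ℤ) + 2
    else if i = -((k : ℤ) + 2) then (k : ℤ)
    else -i
  else i

/-- The underlying function of `w' ∈ Bₙ`: `1 ↦ 1`, `2 ↦ 2`, and `i ↦ -i` for `3 ≤ i ≤ n`,
extended by `w(-i) = -w(i)` and fixing all integers outside `{-n, …, -1, 1, …, n}`. -/
def wpFun (n : ℕ) : ℤ → ℤ := fun i =>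
  if (-(n : ℤ) ≤ i ∧ i ≤ (n : ℤ)) ∧ (i < -2 ∨ 2 < i) then -i else i

/-- `w`, viewed as a signed permutation of `{1, …, n}` via the values `w(1), …, w(n)`,
contains the signed pattern `p` (given by its list of values `p(1), …, p(m)`). -/
def ContainsPattern (n : ℕ) (w : ℤ → ℤ) (p : List ℤ) : Prop :=
  ∃ j : Fin p.length → ℤ, StrictMono j ∧ (∀ r, 1 ≤ j r ∧ j r ≤ (n : ℤ)) ∧
    (∀ r s, w (j r) < w (j s) ↔ p.get r < p.get s) ∧
    (∀ r, w (j r) < 0 ↔ p.get r < 0)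

/-!
Since `w₀ᴮ` is central, rotating a word for `w₀ᴮ` yields another word for `w₀ᴮ` of the same length.
Rotation by `j - 1` therefore permutes the reduced decompositions, and it carries the factor in
positions `j, …, j + 3` to the first four letters, provided that this factor does not wrap around
the end of the word. For this one needs `n² ≤ ℓ(w₀ᴮ)`: every generator creates at most two
inversions, counted suitably, while `w₀ᴮ` has `2n²` of them.
-/

section Rotation

lemma prod_rotate_of_forall_commute {M : Type*} [LeftCancelMonoid M] {l : List M}
    (h : ∀ a ∈ l, Commute a l.prod) (k : ℕ) : (l.rotate k).prod = l.prod := by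
  rw [List.rotate_eq_drop_append_take_mod, List.prod_append]
  set r := k % l.length
  have take_commute : Commute (l.take r).prod l.prod :=
    Commute.list_prod_left _ _ fun a ha => h a (List.mem_of_mem_take ha)
  apply mul_left_cancel (a := (l.take r).prod)
  rw [← mul_assoc, List.prod_take_mul_prod_drop, take_commute.eq]

lemma rotate_surjective {α : Type*} (k : ℕ) :
    Function.Surjective fun l : List α => l.rotate k := by
  intro l
  rcases l.length.eq_zero_or_pos with hl | hl
  · exact ⟨l, by simp [List.eq_nil_of_length_eq_zero hl]⟩
  · refine ⟨l.rotate (l.length * k - k), ?_⟩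
    dsimp only
    rw [List.rotate_rotate, Nat.sub_add_cancel (Nat.le_mul_of_pos_left k hl),
      List.rotate_length_mul]

lemma take_rotate_eq_take_drop {α : Type*} {l : List α} {k m : ℕ} (h : k + m ≤ l.length) :
    (l.rotate k).take m = (l.drop k).take m := by
  rw [List.rotate_eq_drop_append_take (by omega),
    List.take_append_of_le_length (by rw [List.length_drop]; omega)]

end Rotation

section Generators

lemma sB_zero_apply (x : ℤ) : sB 0 x = if x = 1 then -1 else if x = -1 then 1 else x := by
  simp [sB, Equiv.swap_apply_def]

lemma sB_apply_of_ne_zero {i : ℕ} (hi : i ≠ 0) (x : ℤ) :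
    sB i x = if x = i then (i : ℤ) + 1 else if x = i + 1 then (i : ℤ)
      else if x = -i then -((i : ℤ) + 1) else if x = -((i : ℤ) + 1) then -(i : ℤ) else x := by
  simp only [sB, hi, if_false, Equiv.Perm.mul_apply, Equiv.swap_apply_def]
  split_ifs <;> omega

lemma sB_apply_zero (i : ℕ) : sB i 0 = 0 := by
  rcases eq_or_ne i 0 with rfl | hi
  · simp [sB_zero_apply]
  · rw [sB_apply_of_ne_zero hi]
    split_ifs <;> omega

lemma sB_mem_Icc {n i : ℕ} (hi : i < n) {x : ℤ} (hx : x ∈ Finset.Icc (-(n : ℤ)) n) :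
    sB i x ∈ Finset.Icc (-(n : ℤ)) n := by
  rw [Finset.mem_Icc] at *
  rcases eq_or_ne i 0 with rfl | h0
  · rw [sB_zero_apply]
    split_ifs <;> omega
  · rw [sB_apply_of_ne_zero h0]
    split_ifs <;> omega

lemma w0B_apply (n : ℕ) (x : ℤ) :
    w0B n x = if -(n : ℤ) ≤ x ∧ x ≤ (n : ℤ) then -x else x := rfl

lemma commute_sB_w0B {n i : ℕ} (hi : i < n) : Commute (sB i) (w0B n) := by
  ext x
  simp only [Equiv.Perm.mul_apply, w0B_apply]
  rcases eq_or_ne i 0 with rfl | h0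
  · simp only [sB_zero_apply]
    split_ifs <;> omega
  · simp only [sB_apply_of_ne_zero h0]
    split_ifs <;> omega

end Generators

namespace IsReducedWord

lemma rotate {n : ℕ} {w : Equiv.Perm ℤ} {l : List ℕ} (hw : ∀ i < n, Commute (sB i) w)
    (hl : IsReducedWord n w l) (k : ℕ) : IsReducedWord n w (l.rotate k) := by
  obtain ⟨lt_n, rfl, minimal⟩ := hl
  refine ⟨fun i hi => lt_n i (List.mem_rotate.mp hi), ?_, by simpa only [List.length_rotate]⟩
  rw [wordProd, List.map_rotate]
  refine prod_rotate_of_forall_commute (fun a ha => ?_) k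
  obtain ⟨i, hi, rfl⟩ := List.mem_map.mp ha
  exact hw i (lt_n i hi)

lemma rotate_iff {n : ℕ} {w : Equiv.Perm ℤ} {l : List ℕ} (hw : ∀ i < n, Commute (sB i) w)
    (k : ℕ) : IsReducedWord n w (l.rotate k) ↔ IsReducedWord n w l := by
  refine ⟨fun hl => ?_, fun hl => hl.rotate hw k⟩
  obtain ⟨m, hm⟩ : l.rotate k ~r l := List.IsRotated.symm ⟨k, rfl⟩
  exact hm ▸ hl.rotate hw m

end IsReducedWord

section Inversions

/-- The pairs of `T` whose order is reversed by `w`, when `T` consists of increasing pairs. -/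
def inversionsIn {α β : Type*} [LT β] [DecidableLT β] (T : Finset (α × α)) (w : α → β) :
    Finset (α × α) :=
  {p ∈ T | w p.2 < w p.1}

lemma card_inversionsIn_comp_le {α β : Type*} [LinearOrder α] [LT β] [DecidableLT β]
    {T : Finset (α × α)} (u : α → β) {v : α → α} (hv : Function.Injective v)
    (hT : ∀ p ∈ T, v p.1 ≤ v p.2 → Prod.map v v p ∈ T) :
    (inversionsIn T (u ∘ v)).card ≤ (inversionsIn T u).card + (inversionsIn T v).card := by
  rw [← Finset.card_filter_add_card_filter_not (s := inversionsIn T (u ∘ v))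
    fun p => v p.1 ≤ v p.2]
  refine Nat.add_le_add ?_ (Finset.card_le_card ?_)
  · refine Finset.card_le_card_of_injOn (Prod.map v v) (fun p hp => ?_) (hv.prodMap hv).injOn
    simp only [inversionsIn, Finset.coe_filter, Finset.mem_filter, Set.mem_ofPred_eq] at hp ⊢
    exact ⟨hT p hp.1.1 hp.2, hp.1.2⟩
  · intro p hp
    simp only [inversionsIn, Finset.mem_filter, not_le] at hp ⊢
    exact ⟨hp.1.1, hp.2⟩

/-- Increasing pairs in `{-n, …, n}` whose larger entry is nonzero. They count every positive root
of `Bₙ` twice: `e_b ± e_a` for `0 < a < b` as `(∓a, b)` and `(-b, ±a)`, and `e_b` as `(0, b)` and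
`(-b, b)`. -/
noncomputable def increasingPairs (n : ℕ) : Finset (ℤ × ℤ) :=
  {p ∈ Finset.Icc (-(n : ℤ)) n ×ˢ (Finset.Icc (-(n : ℤ)) n).erase 0 | p.1 < p.2}

lemma mem_increasingPairs {n : ℕ} {p : ℤ × ℤ} :
    p ∈ increasingPairs n ↔ p.1 ∈ Finset.Icc (-(n : ℤ)) n ∧
      (p.2 ≠ 0 ∧ p.2 ∈ Finset.Icc (-(n : ℤ)) n) ∧ p.1 < p.2 := by
  simp only [increasingPairs, Finset.mem_filter, Finset.mem_product, Finset.mem_erase, and_assoc]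

lemma card_increasingPairs (n : ℕ) : (increasingPairs n).card = 2 * n ^ 2 := by
  set nonzero := (Finset.Icc (-(n : ℤ)) n).erase 0 with h_nonzero
  have mem_nonzero {b : ℤ} : b ∈ nonzero ↔ b ≠ 0 ∧ -(n : ℤ) ≤ b ∧ b ≤ n := by
    rw [h_nonzero, Finset.mem_erase, Finset.mem_Icc]
  have card_nonzero : (nonzero.card : ℤ) = 2 * n := by
    rw [Finset.card_erase_of_mem (by simp), Int.card_Icc]
    omega
  have sum_nonzero : ∑ b ∈ nonzero, b = 0 :=
    Finset.sum_involution (fun b _ => -b) (fun b _ => add_neg_cancel b)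
      (fun b _ hb => by omega) (fun b hb => by rw [mem_nonzero] at hb ⊢; omega)
      (fun b _ => neg_neg b)
  have card_below (b : ℤ) (hb : b ∈ nonzero) :
      (({a ∈ Finset.Icc (-(n : ℤ)) n | a < b}.card : ℕ) : ℤ) = b + n := by
    have h_Ico : {a ∈ Finset.Icc (-(n : ℤ)) n | a < b} = Finset.Ico (-(n : ℤ)) b := by
      ext a
      simp only [mem_nonzero, Finset.mem_filter, Finset.mem_Icc, Finset.mem_Ico] at hb ⊢
      omega
    rw [h_Ico, Int.card_Ico]
    rw [mem_nonzero] at hb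
    omega
  zify
  calc ((increasingPairs n).card : ℤ)
      = ∑ b ∈ nonzero, (({a ∈ Finset.Icc (-(n : ℤ)) n | a < b}.card : ℕ) : ℤ) := by
        simp only [increasingPairs, Finset.card_filter, Finset.sum_product_right, Nat.cast_sum,
          h_nonzero]
    _ = ∑ b ∈ nonzero, (b + n) := Finset.sum_congr rfl card_below
    _ = 2 * n ^ 2 := by
        rw [Finset.sum_add_distrib, sum_nonzero, Finset.sum_const, nsmul_eq_mul, card_nonzero]
        ring

lemma map_sB_mem_increasingPairs {n i : ℕ} (hi : i < n) {p : ℤ × ℤ} (hp : p ∈ increasingPairs n)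
    (h : sB i p.1 ≤ sB i p.2) : Prod.map (sB i) (sB i) p ∈ increasingPairs n := by
  obtain ⟨h_left, ⟨h_ne, h_right⟩, h_lt⟩ := mem_increasingPairs.mp hp
  have map_ne : sB i p.2 ≠ 0 := fun h0 =>
    h_ne ((sB i).injective (h0.trans (sB_apply_zero i).symm))
  exact mem_increasingPairs.mpr ⟨sB_mem_Icc hi h_left, ⟨map_ne, sB_mem_Icc hi h_right⟩,
    h.lt_of_ne ((sB i).injective.ne h_lt.ne)⟩

lemma card_inversionsIn_sB_le (n i : ℕ) :
    (inversionsIn (increasingPairs n) (sB i)).card ≤ 2 := by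
  suffices h : ∃ p q, inversionsIn (increasingPairs n) (sB i) ⊆ {p, q} by
    obtain ⟨p, q, hpq⟩ := h
    exact (Finset.card_le_card hpq).trans Finset.card_le_two
  rcases eq_or_ne i 0 with rfl | hi
  · refine ⟨(-1, 1), (0, 1), fun ⟨a, b⟩ hab => ?_⟩
    simp only [inversionsIn, Finset.mem_filter, mem_increasingPairs, sB_zero_apply] at hab
    simp only [Finset.mem_insert, Finset.mem_singleton, Prod.mk.injEq]
    split_ifs at hab <;> omega
  · refine ⟨(i, i + 1), (-(i + 1), -i), fun ⟨a, b⟩ hab => ?_⟩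
    simp only [inversionsIn, Finset.mem_filter, mem_increasingPairs,
      sB_apply_of_ne_zero hi] at hab
    simp only [Finset.mem_insert, Finset.mem_singleton, Prod.mk.injEq]
    split_ifs at hab <;> omega

lemma card_inversionsIn_wordProd_le {n : ℕ} {l : List ℕ} (hl : ∀ i ∈ l, i < n) :
    (inversionsIn (increasingPairs n) (wordProd l)).card ≤ 2 * l.length := by
  induction l using List.reverseRecOn with
  | nil =>
    have no_inversions : inversionsIn (increasingPairs n) (wordProd []) = ∅ :=
      Finset.filter_false_of_mem fun p hp => (mem_increasingPairs.mp hp).2.2.not_gt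
    rw [no_inversions, Finset.card_empty]
    exact Nat.zero_le _
  | append_singleton l i ih =>
    have wordProd_append : ⇑(wordProd (l ++ [i])) = wordProd l ∘ sB i := by
      simp [wordProd, Equiv.Perm.coe_mul]
    have prefix_bound := ih fun k hk => hl k (List.mem_append_left _ hk)
    calc (inversionsIn (increasingPairs n) (wordProd (l ++ [i]))).card
        ≤ (inversionsIn (increasingPairs n) (wordProd l)).card
            + (inversionsIn (increasingPairs n) (sB i)).card := by
          rw [wordProd_append]
          exact card_inversionsIn_comp_le _ (sB i).injective fun p hp =>
            map_sB_mem_increasingPairs (hl i (by simp)) hp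
      _ ≤ 2 * l.length + 2 := Nat.add_le_add prefix_bound (card_inversionsIn_sB_le n i)
      _ = 2 * (l ++ [i]).length := by rw [List.length_append, List.length_singleton]; ring

lemma inversionsIn_w0B (n : ℕ) :
    inversionsIn (increasingPairs n) (w0B n) = increasingPairs n := by
  refine Finset.filter_true_of_mem fun p hp => ?_
  obtain ⟨h_left, ⟨-, h_right⟩, h_lt⟩ := mem_increasingPairs.mp hp
  rw [w0B_apply, w0B_apply, if_pos (Finset.mem_Icc.mp h_left), if_pos (Finset.mem_Icc.mp h_right)]
  exact neg_lt_neg h_lt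

lemma sq_le_length_of_wordProd_eq_w0B {n : ℕ} {l : List ℕ} (hl : ∀ i ∈ l, i < n)
    (hw : wordProd l = w0B n) : n ^ 2 ≤ l.length := by
  have h := card_inversionsIn_wordProd_le hl
  rw [hw, inversionsIn_w0B, card_increasingPairs] at h
  omega

end Inversions

theorem move01_position_equidistributed_general {n k m : ℕ} (hkm : k + m ≤ n ^ 2)
    (P : List ℕ → Prop) :
    Nat.card {l : List ℕ // IsReducedWord n (w0B n) l ∧ P ((l.drop k).take m)}
      = Nat.card {l : List ℕ // IsReducedWord n (w0B n) l ∧ P (l.take m)} := by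
  let rotation : List ℕ ≃ List ℕ :=
    Equiv.ofBijective (fun l => l.rotate k) ⟨List.rotate_injective k, rotate_surjective k⟩
  refine Nat.card_congr (rotation.subtypeEquiv fun l => ?_)
  change _ ↔ IsReducedWord n (w0B n) (l.rotate k) ∧ P ((l.rotate k).take m)
  rw [IsReducedWord.rotate_iff fun _ => commute_sB_w0B]
  refine and_congr_right fun hl => ?_
  rw [take_rotate_eq_take_drop (hkm.trans (sq_le_length_of_wordProd_eq_w0B hl.1 hl.2.1))]

/-- For `n ≥ 2` and `1 ≤ j ≤ n² - 3`, the number of reduced decompositions of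
`w₀ᴮ ∈ Bₙ` whose letters in positions `j, j+1, j+2, j+3` form `(0,1,0,1)` or
`(1,0,1,0)` equals the number of reduced decompositions of `w₀ᴮ` whose first four
letters form `(0,1,0,1)` or `(1,0,1,0)`. -/
theorem move01_position_equidistributed (n j : ℕ) (hn : 2 ≤ n) (hj1 : 1 ≤ j)
    (hj2 : j ≤ n ^ 2 - 3) :
    Nat.card {l : List ℕ // IsReducedWord n (w0B n) l ∧
        ((l.drop (j - 1)).take 4 = [0, 1, 0, 1] ∨
          (l.drop (j - 1)).take 4 = [1, 0, 1, 0])}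
      = Nat.card {l : List ℕ // IsReducedWord n (w0B n) l ∧
          (l.take 4 = [0, 1, 0, 1] ∨ l.take 4 = [1, 0, 1, 0])} := by
  have window_le : j - 1 + 4 ≤ n ^ 2 := by
    have four_le : 2 ^ 2 ≤ n ^ 2 := Nat.pow_le_pow_left hn 2
    omega
  exact move01_position_equidistributed_general window_le
    fun factor => factor = [0, 1, 0, 1] ∨ factor = [1, 0, 1, 0]
end

section
/- Let n ≥ 3 and 1 ≤ k ≤ n−2. Deleting the first three letters gives a bijection from the set of reduced decompositions of w_0^B ∈ B_n whose first three letters are (k, k+1, k) onto R(w_k), and likewise a bijection from the set of reduced decompositions of w_0^B whose first three letters are (k+1, k, k+1) onto R(w_k). Consequently, the number of reduced decompositions of w_0^B beginning with (k, k+1, k) or (k+1, k, k+1) equals 2·|R(w_k)|. -/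
/-!
A word `l` for `f` shortens to a word for `f sᵢ` as soon as `f` inverts the pair of points that `sᵢ`
exchanges (exchange property). Since `w₀ᴮ` negates `{-n, …, n}`, it turns every ascent of `u` into a
descent of `w₀ᴮ u`. Hence, reading a reduced word of `u` letter by letter, any word for `w₀ᴮ`
shortens by one letter at each step, ending in a word for `w₀ᴮ u`; reversed, it is a word for
`v = u⁻¹ w₀ᴮ`. So lengths add up in `w₀ᴮ = u v`, and prefixing a reduced word of `u` identifies
`R(v)` with the reduced words of `w₀ᴮ` having that prefix. Both `k (k+1) k` and `(k+1) k (k+1)` are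
reduced words of the reflection `u` with `w₀ᴮ = u w_k`.
-/

/-- The signed reflection exchanging `x` with `y` and `-x` with `-y`. For `y = -x` the two swaps
coincide, and only one of them is taken. -/
def signedSwap (x y : ℤ) : Equiv.Perm ℤ :=
  if y = -x then Equiv.swap x y else Equiv.swap x y * Equiv.swap (-x) (-y)

/-- The smaller of the two points `lowB i < i + 1` exchanged by `sᵢ`. It is `-1` rather than `0` for
`i = 0`, so that a signed permutation `f` has a (right) descent at `i` iff `f (i + 1) < f (lowB i)`,
for every `i`. -/
def lowB (i : ℕ) : ℤ := if i = 0 then -1 else i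

section ReducedWords

variable {n : ℕ} {u v : Equiv.Perm ℤ} {p q l : List ℕ}

lemma lowB_ne_zero (i : ℕ) : lowB i ≠ 0 := by
  unfold lowB
  split_ifs <;> omega

lemma lowB_lt (i : ℕ) : lowB i < i + 1 := by
  unfold lowB
  split_ifs <;> omega

lemma abs_lowB_le {i : ℕ} (hi : i < n) : |lowB i| ≤ n := by
  rw [abs_le]
  unfold lowB
  split_ifs <;> omega

lemma signedSwap_map {f : Equiv.Perm ℤ} (hf : Function.Odd f) (x y : ℤ) :
    signedSwap (f x) (f y) = f * signedSwap x y * f⁻¹ := by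
  have opposite_iff : f y = -f x ↔ y = -x := by rw [← hf, f.injective.eq_iff]
  unfold signedSwap
  simp only [opposite_iff]
  split_ifs
  · exact Equiv.swap_apply_apply f x y
  · rw [← hf, ← hf, Equiv.swap_apply_apply, Equiv.swap_apply_apply]
    group

lemma sB_apply (i : ℕ) (x : ℤ) : sB i x =
    if i = 0 then (if x = 1 then -1 else if x = -1 then 1 else x)
    else if x = i then i + 1 else if x = i + 1 then i
    else if x = -i then -(i + 1) else if x = -(i + 1) then -i else x := by
  unfold sB
  split_ifs <;> simp only [Equiv.Perm.mul_apply, Equiv.swap_apply_def] <;> split_ifs <;> omega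

lemma odd_sB (i : ℕ) : Function.Odd (sB i) := by
  intro x
  simp only [sB_apply]
  split_ifs <;> omega

lemma sB_mul_self (i : ℕ) : sB i * sB i = 1 := by
  ext x
  rw [Equiv.Perm.mul_apply, Equiv.Perm.one_apply]
  grind [sB_apply]

lemma sB_apply_lowB (i : ℕ) : sB i (lowB i) = i + 1 := by
  grind [sB_apply, lowB]

lemma sB_apply_succ (i : ℕ) : sB i (i + 1) = lowB i := by
  rw [← sB_apply_lowB, ← Equiv.Perm.mul_apply, sB_mul_self, Equiv.Perm.one_apply]

lemma sB_inv (i : ℕ) : (sB i)⁻¹ = sB i := inv_eq_of_mul_eq_one_left (sB_mul_self i)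

lemma abs_sB_le {i : ℕ} (hi : i < n) {x : ℤ} (hx : |x| ≤ n) : |sB i x| ≤ n := by
  rw [abs_le] at *
  rw [sB_apply]
  split_ifs <;> omega

lemma sB_eq_signedSwap (i : ℕ) : sB i = signedSwap (lowB i) (i + 1) := by
  unfold sB signedSwap lowB
  split_ifs with hi <;> first | omega | simp [hi, Equiv.swap_comm]

lemma sB_eq_signedSwap_of_lt {i : ℕ} {x y : ℤ} (hx : x ≠ 0) (hy : y ≠ 0) (hxy : x < y)
    (h : sB i y < sB i x) : sB i = signedSwap x y := by
  have simple_pair : (x = lowB i ∧ y = i + 1) ∨ (x = -(i + 1) ∧ y = -lowB i) := by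
    simp only [sB_apply] at h
    unfold lowB
    split_ifs at * <;> omega
  rcases simple_pair with ⟨rfl, rfl⟩ | ⟨rfl, rfl⟩
  · exact sB_eq_signedSwap i
  · rw [sB_eq_signedSwap]
    ext z
    unfold signedSwap lowB
    split_ifs <;> simp only [Equiv.Perm.mul_apply, Equiv.swap_apply_def] <;> split_ifs <;> omega

lemma wordProd_cons (i : ℕ) (l : List ℕ) : wordProd (i :: l) = sB i * wordProd l := by
  simp [wordProd]

lemma wordProd_singleton (i : ℕ) : wordProd [i] = sB i := List.prod_singleton

lemma wordProd_append (l m : List ℕ) : wordProd (l ++ m) = wordProd l * wordProd m := by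
  simp [wordProd]

lemma wordProd_reverse (l : List ℕ) : wordProd l.reverse = (wordProd l)⁻¹ := by
  simp [wordProd, List.prod_inv_reverse, Function.comp_def, sB_inv]

lemma odd_wordProd (l : List ℕ) : Function.Odd (wordProd l) := by
  induction l with
  | nil => exact fun _ => rfl
  | cons i l ih => simpa [wordProd_cons] using (odd_sB i).comp_odd ih

lemma wordProd_apply_ne_zero (l : List ℕ) {x : ℤ} (hx : x ≠ 0) : wordProd l x ≠ 0 := by
  rw [← (odd_wordProd l).map_zero]
  exact (wordProd l).injective.ne hx

lemma abs_wordProd_le (hl : ∀ i ∈ l, i < n) {x : ℤ} (hx : |x| ≤ n) : |wordProd l x| ≤ n := by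
  induction l with
  | nil => exact hx
  | cons i l ih =>
    rw [List.forall_mem_cons] at hl
    rw [wordProd_cons, Equiv.Perm.mul_apply]
    exact abs_sB_le hl.1 (ih hl.2)

theorem strong_exchange (l : List ℕ) {x y : ℤ} (hx : x ≠ 0) (hy : y ≠ 0) (hxy : x < y)
    (h : wordProd l y < wordProd l x) :
    ∃ j < l.length, wordProd (l.eraseIdx j) = wordProd l * signedSwap x y := by
  induction l with
  | nil => exact absurd h hxy.not_gt
  | cons i l ih =>
    rw [wordProd_cons] at h ⊢
    rcases lt_or_gt_of_ne ((wordProd l).injective.ne hxy.ne) with ascent | descent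
    · -- `sᵢ` inverts the pair `l x < l y`, so it is the conjugate by `l` of the reflection
      have sB_eq : sB i = wordProd l * signedSwap x y * (wordProd l)⁻¹ := by
        rw [← signedSwap_map (odd_wordProd l)]
        exact sB_eq_signedSwap_of_lt (wordProd_apply_ne_zero l hx) (wordProd_apply_ne_zero l hy)
          ascent h
      refine ⟨0, by simp, ?_⟩
      calc wordProd l = sB i * (sB i * wordProd l) := by rw [← mul_assoc, sB_mul_self, one_mul]
        _ = sB i * (wordProd l * signedSwap x y) := by
          congr 1
          rw [sB_eq, inv_mul_cancel_right]
        _ = sB i * wordProd l * signedSwap x y := (mul_assoc _ _ _).symm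
    · obtain ⟨j, hj, hprod⟩ := ih descent
      refine ⟨j + 1, by simpa using hj, ?_⟩
      rw [List.eraseIdx_cons_succ, wordProd_cons, hprod, mul_assoc]

lemma exists_word_mul_sB_of_descent (hl : ∀ i ∈ l, i < n) {i : ℕ}
    (h : wordProd l (i + 1) < wordProd l (lowB i)) :
    ∃ m : List ℕ, (∀ i ∈ m, i < n) ∧ m.length + 1 = l.length ∧
      wordProd m = wordProd l * sB i := by
  obtain ⟨j, hj, hprod⟩ := strong_exchange l (lowB_ne_zero i) (by omega) (lowB_lt i) h
  exact ⟨l.eraseIdx j, fun _ hi => hl _ (List.mem_of_mem_eraseIdx hi),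
    List.length_eraseIdx_add_one hj, by rw [hprod, sB_eq_signedSwap]⟩

namespace IsReducedWord

lemma nil : IsReducedWord n 1 [] := ⟨by simp, rfl, by simp⟩

lemma of_length_eq (hp : IsReducedWord n u p) (hq : ∀ i ∈ q, i < n) (hqu : wordProd q = u)
    (hlen : q.length = p.length) : IsReducedWord n u q :=
  ⟨hq, hqu, fun m hm hmu => hlen.trans_le (hp.2.2 m hm hmu)⟩

lemma length_eq (hp : IsReducedWord n u p) (hq : IsReducedWord n u q) : p.length = q.length :=
  (hp.2.2 q hq.1 hq.2.1).antisymm (hq.2.2 p hp.1 hp.2.1)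

lemma of_append_left (h : IsReducedWord n u (p ++ q)) : IsReducedWord n (wordProd p) p := by
  obtain ⟨hletters, hprod, hmin⟩ := h
  rw [List.forall_mem_append] at hletters
  refine ⟨hletters.1, rfl, fun m hm hmp => ?_⟩
  have := hmin (m ++ q) (List.forall_mem_append.2 ⟨hm, hletters.2⟩)
    (by rw [wordProd_append, hmp, ← wordProd_append, hprod])
  simpa using this

lemma of_append_right (h : IsReducedWord n u (p ++ q)) : IsReducedWord n (wordProd q) q := by
  obtain ⟨hletters, hprod, hmin⟩ := h
  rw [List.forall_mem_append] at hletters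
  refine ⟨hletters.2, rfl, fun m hm hmq => ?_⟩
  have := hmin (p ++ m) (List.forall_mem_append.2 ⟨hletters.1, hm⟩)
    (by rw [wordProd_append, hmq, ← wordProd_append, hprod])
  simpa using this

lemma ascent_of_append_singleton {i : ℕ} (h : IsReducedWord n u (p ++ [i])) :
    wordProd p (lowB i) < wordProd p (i + 1) := by
  by_contra! not_ascent
  obtain ⟨m, hm, hlen, hprod⟩ := exists_word_mul_sB_of_descent h.of_append_left.1
    (not_ascent.lt_of_ne ((wordProd p).injective.ne (lowB_lt i).ne'))
  have := h.2.2 m hm (by rw [hprod, ← h.2.1, wordProd_append, wordProd_singleton])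
  rw [List.length_append, List.length_singleton] at this
  omega

lemma append_singleton (hp : IsReducedWord n u p) {i : ℕ} (hi : i < n)
    (ascent : u (lowB i) < u (i + 1)) : IsReducedWord n (u * sB i) (p ++ [i]) := by
  refine ⟨List.forall_mem_append.2 ⟨hp.1, List.forall_mem_singleton.2 hi⟩,
    by rw [wordProd_append, hp.2.1, wordProd_singleton], fun m hm hprod => ?_⟩
  have descent : wordProd m (i + 1) < wordProd m (lowB i) := by
    simpa only [hprod, Equiv.Perm.mul_apply, sB_apply_lowB, sB_apply_succ] using ascent
  obtain ⟨m', hm', hlen, hprod'⟩ := exists_word_mul_sB_of_descent hm descent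
  have := hp.2.2 m' hm' (by rw [hprod', hprod, mul_assoc, sB_mul_self, mul_one])
  rw [List.length_append, List.length_singleton]
  omega

end IsReducedWord

lemma w0B_apply_of_abs_le {x : ℤ} (hx : |x| ≤ n) : w0B n x = -x := if_pos (abs_le.1 hx)

lemma w0B_mul_wordProd_descent (hl : ∀ i ∈ l, i < n) {i : ℕ} (hi : i < n)
    (ascent : wordProd l (lowB i) < wordProd l (i + 1)) :
    (w0B n * wordProd l) (i + 1) < (w0B n * wordProd l) (lowB i) := by
  have succ_le : |(i + 1 : ℤ)| ≤ n := by
    rw [abs_le]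
    omega
  rw [Equiv.Perm.mul_apply, Equiv.Perm.mul_apply,
    w0B_apply_of_abs_le (abs_wordProd_le hl (abs_lowB_le hi)),
    w0B_apply_of_abs_le (abs_wordProd_le hl succ_le)]
  exact neg_lt_neg ascent

lemma exists_word_w0B_mul (hl : ∀ i ∈ l, i < n) (hw : wordProd l = w0B n)
    (hp : IsReducedWord n u p) :
    ∃ m : List ℕ, (∀ i ∈ m, i < n) ∧ p.length + m.length = l.length ∧
      wordProd m = w0B n * u := by
  induction p using List.reverseRecOn generalizing u with
  | nil => exact ⟨l, hl, by simp, by rw [hw, ← hp.2.1]; rfl⟩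
  | append_singleton p i ih =>
    obtain ⟨m, hm, hlen, hprod⟩ := ih hp.of_append_left
    have descent := w0B_mul_wordProd_descent hp.of_append_left.1 (hp.1 i (by simp))
      hp.ascent_of_append_singleton
    rw [← hprod] at descent
    obtain ⟨m', hm', hlen', hprod'⟩ := exists_word_mul_sB_of_descent hm descent
    refine ⟨m', hm', ?_, ?_⟩
    · rw [List.length_append, List.length_singleton]
      omega
    · rw [hprod', hprod, mul_assoc, ← wordProd_singleton, ← wordProd_append, hp.2.1]

theorem isReducedWord_w0B_append_iff (hp : IsReducedWord n u p) (huv : u * v = w0B n) :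
    IsReducedWord n (w0B n) (p ++ l) ↔ IsReducedWord n v l := by
  constructor
  · intro h
    have hl : wordProd l = v := by
      apply mul_left_cancel (a := u)
      rw [huv, ← h.2.1, wordProd_append, hp.2.1]
    exact hl ▸ h.of_append_right
  · intro h
    refine ⟨List.forall_mem_append.2 ⟨hp.1, h.1⟩, by rw [wordProd_append, hp.2.1, h.2.1, huv],
      fun l' hl' hw => ?_⟩
    obtain ⟨m, hm, hlen, hprod⟩ := exists_word_w0B_mul hl' hw hp
    have hv : wordProd m.reverse = v := by
      have w0B_inv : (w0B n)⁻¹ = w0B n := rfl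
      rw [wordProd_reverse, hprod, mul_inv_rev, w0B_inv, ← huv, inv_mul_cancel_left]
    have := h.2.2 m.reverse (by simpa using hm) hv
    rw [List.length_reverse] at this
    rw [List.length_append]
    omega

lemma bijOn_drop_of_append_mem_iff {α : Type*} {S T : Set (List α)} (p : List α)
    (h : ∀ l, p ++ l ∈ S ↔ l ∈ T) :
    Set.BijOn (fun l => l.drop p.length) {l | l ∈ S ∧ l.take p.length = p} T := by
  have append_drop {l : List α} (hl : l.take p.length = p) : p ++ l.drop p.length = l := by
    rw [← congrArg (· ++ l.drop p.length) hl, List.take_append_drop]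
  refine ⟨?_, ?_, fun l hl => ⟨p ++ l, ⟨(h l).2 hl, List.take_left⟩, List.drop_left⟩⟩
  · rintro l ⟨hS, hl⟩
    rwa [← h, append_drop hl]
  · rintro l ⟨_, hl⟩ m ⟨_, hm⟩ hdrop
    rw [← append_drop hl, ← append_drop hm]
    exact congrArg (p ++ ·) hdrop

lemma card_or_eq_two_mul {α β : Type*} {P Q : α → Prop} {t : Set β} {f g : α → β}
    (hf : Set.BijOn f {a | P a} t) (hg : Set.BijOn g {a | Q a} t) (hPQ : Disjoint P Q) :
    Nat.card {a // P a ∨ Q a} = 2 * Nat.card t := by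
  classical
  have e : {a // P a ∨ Q a} ≃ Bool × t :=
    (subtypeOrEquiv P Q hPQ).trans
      (((hf.equiv f).sumCongr (hg.equiv g)).trans (Equiv.boolProdEquivSum t).symm)
  rw [Nat.card_congr e, Nat.card_prod, Nat.card_eq_fintype_card, Fintype.card_bool]

theorem drop_three_bijection_general (hp : IsReducedWord n u p) (hq : IsReducedWord n u q)
    (hpq : p ≠ q) (huv : u * v = w0B n) :
    Set.BijOn (fun l => l.drop p.length)
      {l : List ℕ | IsReducedWord n (w0B n) l ∧ l.take p.length = p} (RSet n v) ∧
    Set.BijOn (fun l => l.drop q.length)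
      {l : List ℕ | IsReducedWord n (w0B n) l ∧ l.take q.length = q} (RSet n v) ∧
    Nat.card {l : List ℕ // IsReducedWord n (w0B n) l ∧
        (l.take p.length = p ∨ l.take q.length = q)} = 2 * Nat.card ↥(RSet n v) := by
  have bijOn {r : List ℕ} (hr : IsReducedWord n u r) : Set.BijOn (fun l => l.drop r.length)
      {l : List ℕ | IsReducedWord n (w0B n) l ∧ l.take r.length = r} (RSet n v) :=
    bijOn_drop_of_append_mem_iff (S := RSet n (w0B n)) r
      fun _ => isReducedWord_w0B_append_iff hr huv
  refine ⟨bijOn hp, bijOn hq, ?_⟩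
  simp only [and_or_left]
  refine card_or_eq_two_mul (bijOn hp) (bijOn hq) (Pi.disjoint_iff.2 fun l => ?_)
  rw [Prop.disjoint_iff, not_and]
  rintro ⟨_, hlp⟩ ⟨_, hlq⟩
  exact hpq (by rw [← hlp, ← hlq, hp.length_eq hq])

section Braid

variable {k : ℕ}

lemma wordProd_palindrome (i j : ℕ) :
    wordProd [i, j, i] = signedSwap (sB i (lowB j)) (sB i (j + 1)) := by
  rw [signedSwap_map (odd_sB i), ← sB_eq_signedSwap, sB_inv]
  simp [wordProd, mul_assoc]

lemma wordProd_braid (hk : 1 ≤ k) : wordProd [k, k + 1, k] = signedSwap k (k + 2) := by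
  rw [wordProd_palindrome]
  congr 1 <;> grind [sB_apply, lowB]

lemma wordProd_braid' (hk : 1 ≤ k) : wordProd [k + 1, k, k + 1] = signedSwap k (k + 2) := by
  rw [wordProd_palindrome]
  congr 1 <;> grind [sB_apply, lowB]

lemma isReducedWord_braid (hk : 1 ≤ k) (hkn : k + 1 < n) :
    IsReducedWord n (signedSwap k (k + 2)) [k, k + 1, k] := by
  have ascent₁ : (1 : Equiv.Perm ℤ) (lowB k) < (1 : Equiv.Perm ℤ) (k + 1) := lowB_lt k
  have ascent₂ : (1 * sB k) (lowB (k + 1)) < (1 * sB k) ((k + 1 : ℕ) + 1) := by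
    rw [one_mul]
    grind [sB_apply, lowB]
  have ascent₃ : (1 * sB k * sB (k + 1)) (lowB k) < (1 * sB k * sB (k + 1)) (k + 1) := by
    have low : sB (k + 1) (lowB k) = k := by grind [sB_apply, lowB]
    have high : sB (k + 1) (k + 1) = k + 2 := by grind [sB_apply]
    rw [one_mul, Equiv.Perm.mul_apply, Equiv.Perm.mul_apply, low, high]
    grind [sB_apply]
  have reduced := ((IsReducedWord.nil.append_singleton (by omega) ascent₁).append_singleton
    hkn ascent₂).append_singleton (by omega) ascent₃
  rw [← wordProd_braid hk]
  exact reduced.2.1 ▸ reduced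

lemma isReducedWord_braid' (hk : 1 ≤ k) (hkn : k + 1 < n) :
    IsReducedWord n (signedSwap k (k + 2)) [k + 1, k, k + 1] :=
  (isReducedWord_braid hk hkn).of_length_eq (by simp; omega) (wordProd_braid' hk) rfl

lemma signedSwap_mul_wk (hk : 1 ≤ k) (hkn : k + 1 < n) (hv : ∀ i : ℤ, v i = wkFun n k i) :
    signedSwap k (k + 2) * v = w0B n := by
  ext x
  rw [Equiv.Perm.mul_apply, hv]
  change _ = w0BFun n x
  unfold signedSwap wkFun w0BFun
  rw [if_neg (by omega)]
  simp only [Equiv.Perm.mul_apply, Equiv.swap_apply_def]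
  split_ifs <;> omega

end Braid

end ReducedWords

/-- Let `n ≥ 3` and `1 ≤ k ≤ n - 2`, and let `w = w_k ∈ Bₙ`.  Deleting the first three
letters is a bijection from the reduced decompositions of `w₀ᴮ` starting with
`(k, k+1, k)` onto `R(w_k)`, and likewise for those starting with `(k+1, k, k+1)`;
consequently the number of reduced decompositions of `w₀ᴮ` starting with one of these
two factors is `2 · |R(w_k)|`. -/
theorem drop_three_bijection (n k : ℕ) (hn : 3 ≤ n) (hk1 : 1 ≤ k) (hk2 : k ≤ n - 2)
    (w : Equiv.Perm ℤ) (hw : ∀ i : ℤ, w i = wkFun n k i) :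
    Set.BijOn (fun l => l.drop 3)
      {l : List ℕ | IsReducedWord n (w0B n) l ∧ l.take 3 = [k, k + 1, k]}
      (RSet n w) ∧
    Set.BijOn (fun l => l.drop 3)
      {l : List ℕ | IsReducedWord n (w0B n) l ∧ l.take 3 = [k + 1, k, k + 1]}
      (RSet n w) ∧
    Nat.card {l : List ℕ // IsReducedWord n (w0B n) l ∧
        (l.take 3 = [k, k + 1, k] ∨ l.take 3 = [k + 1, k, k + 1])}
      = 2 * Nat.card ↥(RSet n w) := by
  have hkn : k + 1 < n := by omega
  exact drop_three_bijection_general (isReducedWord_braid hk1 hkn) (isReducedWord_braid' hk1 hkn)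
    (by simp) (signedSwap_mul_wk hk1 hkn hw)
end
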